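/- For integers n and t with n ≥ 2t + 3 and t ≥ 2, D_R(G8) − D_R(G⁰(n,t)) = (10/3)n + (2/3)t − 62/3, where G8 is the cactus on n vertices consisting of t − 2 triangles, two quadrilaterals C4, and n − 2t − 3 pendent edges, all sharing a single common vertex v1. -/

import Mathlib

open Finset

/-- Effective resistance between two vertices of a graph (for a connected graph
this is the effective resistance when every edge is a unit resistor), defined via
the matrix-tree / spanning-two-forest determinant formula. -/
noncomputable def effRes {V : Type*} [Finite V] (G : SimpleGraph V) (u v : V) : ℝ :=
  letI := Fintype.ofFinite V
  letI := Classical.decEq V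
  letI : DecidableRel G.Adj := Classical.decRel _
  if u = v then 0
  else
    Matrix.det ((G.lapMatrix ℝ).submatrix
        (fun w : {w : V // w ≠ u ∧ w ≠ v} => (w : V)) (fun w => (w : V)))
      / Matrix.det ((G.lapMatrix ℝ).submatrix
        (fun w : {w : V // w ≠ u} => (w : V)) (fun w => (w : V)))

/-- The degree resistance distance `D_R(G) = Σ_{ {u,v} ⊆ V } (d(u)+d(v)) R(u,v)`. -/
noncomputable def degRes {V : Type*} [Finite V] (G : SimpleGraph V) : ℝ :=
  letI := Fintype.ofFinite V
  letI := Classical.decEq V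
  letI : DecidableRel G.Adj := Classical.decRel _
  (1 / 2) * ∑ u : V, ∑ v : V, ((G.degree u : ℝ) + (G.degree v : ℝ)) * effRes G u v

/-- The Kirchhoff index `Kf(G) = Σ_{ {u,v} ⊆ V } R(u,v)`. -/
noncomputable def kirchhoffIndex {V : Type*} [Finite V] (G : SimpleGraph V) : ℝ :=
  letI := Fintype.ofFinite V
  (1 / 2) * ∑ u : V, ∑ v : V, effRes G u v

/-- `Kf_v(G) = Σ_{u ∈ V} R(u,v)`. -/
noncomputable def Kfv {V : Type*} [Finite V] (G : SimpleGraph V) (v : V) : ℝ :=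
  letI := Fintype.ofFinite V
  ∑ u : V, effRes G u v

/-- `D_v(G) = Σ_{u ∈ V} d(u) R(u,v)`. -/
noncomputable def Dv {V : Type*} [Finite V] (G : SimpleGraph V) (v : V) : ℝ :=
  letI := Fintype.ofFinite V
  letI := Classical.decEq V
  letI : DecidableRel G.Adj := Classical.decRel _
  ∑ u : V, (G.degree u : ℝ) * effRes G u v

/-- A subgraph is a cycle if it is connected and `2`-regular. -/
def IsCycleSubgraph {V : Type*} {G : SimpleGraph V} (H : G.Subgraph) : Prop :=
  H.coe.Connected ∧ ∀ v ∈ H.verts, {u | H.Adj v u}.ncard = 2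

/-- A cactus is a connected graph in which any two distinct cycles share at most
one vertex (equivalently, every block is an edge or a cycle). -/
def IsCactus {V : Type*} (G : SimpleGraph V) : Prop :=
  G.Connected ∧ ∀ H₁ H₂ : G.Subgraph, IsCycleSubgraph H₁ → IsCycleSubgraph H₂ →
    H₁ ≠ H₂ → (H₁.verts ∩ H₂.verts).ncard ≤ 1

/-- The number of cycles of a graph. -/
noncomputable def numCycles {V : Type*} (G : SimpleGraph V) : ℕ :=
  {H : G.Subgraph | IsCycleSubgraph H}.ncard

/-- `G ∈ Cact(n;t)`: `G` is a cactus with `n` vertices and `t` cycles. -/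
def MemCact {V : Type*} (n t : ℕ) (G : SimpleGraph V) : Prop :=
  IsCactus G ∧ Nat.card V = n ∧ numCycles G = t

/-- `G⁰(n,t)`: `t` triangles (on vertices `2i+1, 2i+2`, `i < t`) and `n - 2t - 1`
pendent edges, all sharing the common vertex `0`. -/
def G0 (n t : ℕ) : SimpleGraph (Fin n) :=
  SimpleGraph.fromRel (fun a b =>
    a.val = 0 ∨ (Odd a.val ∧ b.val = a.val + 1 ∧ b.val ≤ 2 * t))

/-- `G3`: `t` triangles, `n - 2t - 3` pendent edges, and one pendent path of
length 2 (through `2t+1` to `2t+2`), all attached at the common vertex `0`. -/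
def G3g (n t : ℕ) : SimpleGraph (Fin n) :=
  SimpleGraph.fromRel (fun a b =>
    (a.val = 0 ∧ b.val ≠ 2 * t + 2) ∨
    (Odd a.val ∧ b.val = a.val + 1 ∧ b.val ≤ 2 * t) ∨
    (a.val = 2 * t + 1 ∧ b.val = 2 * t + 2))

/-- `G4`: `t` triangles and `n - 2t - 2` pendent edges at the common vertex `0`,
together with one pendent edge (to `2t+1`) attached at the triangle vertex `1`. -/
def G4g (n t : ℕ) : SimpleGraph (Fin n) :=
  SimpleGraph.fromRel (fun a b =>
    (a.val = 0 ∧ b.val ≠ 2 * t + 1) ∨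
    (Odd a.val ∧ b.val = a.val + 1 ∧ b.val ≤ 2 * t) ∨
    (a.val = 1 ∧ b.val = 2 * t + 1))

/-- `G5`: `t - 1` triangles, one quadrilateral `C₄` (on `0, 2t-1, 2t, 2t+1`), and
`n - 2t - 2` pendent edges, all sharing the common vertex `0`. -/
def G5g (n t : ℕ) : SimpleGraph (Fin n) :=
  SimpleGraph.fromRel (fun a b =>
    (a.val = 0 ∧ b.val ≠ 2 * t) ∨
    (Odd a.val ∧ b.val = a.val + 1 ∧ b.val ≤ 2 * t - 2) ∨
    (a.val = 2 * t - 1 ∧ b.val = 2 * t) ∨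
    (a.val = 2 * t ∧ b.val = 2 * t + 1))

/-- `G6`: `t - 1` triangles, one quadrilateral `C₄` (on `0, 2t-1, 2t, 2t+1`), and
`n - 2t - 3` pendent edges at the common vertex `0`, together with one pendent edge
(to `2t+2`) attached at the quadrilateral vertex `2t-1`, which is adjacent to `0`. -/
def G6g (n t : ℕ) : SimpleGraph (Fin n) :=
  SimpleGraph.fromRel (fun a b =>
    (a.val = 0 ∧ b.val ≠ 2 * t ∧ b.val ≠ 2 * t + 2) ∨
    (Odd a.val ∧ b.val = a.val + 1 ∧ b.val ≤ 2 * t - 2) ∨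
    (a.val = 2 * t - 1 ∧ (b.val = 2 * t ∨ b.val = 2 * t + 2)) ∨
    (a.val = 2 * t ∧ b.val = 2 * t + 1))

/-- `G7`: `t - 1` triangles, one quadrilateral `C₄` (on `0, 2t-1, 2t, 2t+1`), and
`n - 2t - 3` pendent edges at the common vertex `0`, together with one pendent edge
(to `2t+2`) attached at the quadrilateral vertex `2t`, which is opposite to `0`. -/
def G7g (n t : ℕ) : SimpleGraph (Fin n) :=
  SimpleGraph.fromRel (fun a b =>
    (a.val = 0 ∧ b.val ≠ 2 * t ∧ b.val ≠ 2 * t + 2) ∨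
    (Odd a.val ∧ b.val = a.val + 1 ∧ b.val ≤ 2 * t - 2) ∨
    (a.val = 2 * t - 1 ∧ b.val = 2 * t) ∨
    (a.val = 2 * t ∧ (b.val = 2 * t + 1 ∨ b.val = 2 * t + 2)))

/-- `G8`: `t - 2` triangles, two quadrilaterals `C₄` (on `0, 2t-3, 2t-2, 2t-1` and
on `0, 2t, 2t+1, 2t+2`), and `n - 2t - 3` pendent edges, all sharing the common
vertex `0`. -/
def G8g (n t : ℕ) : SimpleGraph (Fin n) :=
  SimpleGraph.fromRel (fun a b =>
    (a.val = 0 ∧ b.val ≠ 2 * t - 2 ∧ b.val ≠ 2 * t + 1) ∨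
    (Odd a.val ∧ b.val = a.val + 1 ∧ b.val ≤ 2 * t - 4) ∨
    (a.val = 2 * t - 3 ∧ b.val = 2 * t - 2) ∨
    (a.val = 2 * t - 2 ∧ b.val = 2 * t - 1) ∨
    (a.val = 2 * t ∧ b.val = 2 * t + 1) ∨
    (a.val = 2 * t + 1 ∧ b.val = 2 * t + 2))

/-- `G9`: `t - 1` triangles, one quadrilateral `C₄` (on `0, 2t-1, 2t, 2t+1`), and
`n - 2t - 3` pendent edges at the common vertex `0`, together with one pendent edge
(to `2t+2`) attached at the non-central triangle vertex `1`. -/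
def G9g (n t : ℕ) : SimpleGraph (Fin n) :=
  SimpleGraph.fromRel (fun a b =>
    (a.val = 0 ∧ b.val ≠ 2 * t ∧ b.val ≠ 2 * t + 2) ∨
    (Odd a.val ∧ b.val = a.val + 1 ∧ b.val ≤ 2 * t - 2) ∨
    (a.val = 2 * t - 1 ∧ b.val = 2 * t) ∨
    (a.val = 2 * t ∧ b.val = 2 * t + 1) ∨
    (a.val = 1 ∧ b.val = 2 * t + 2))

/-- `G10`: `t - 1` triangles, one pentagon `C₅` (on `0, 2t-1, 2t, 2t+1, 2t+2`), and
`n - 2t - 3` pendent edges, all sharing the common vertex `0`. -/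
def G10g (n t : ℕ) : SimpleGraph (Fin n) :=
  SimpleGraph.fromRel (fun a b =>
    (a.val = 0 ∧ b.val ≠ 2 * t ∧ b.val ≠ 2 * t + 1) ∨
    (Odd a.val ∧ b.val = a.val + 1 ∧ b.val ≤ 2 * t - 2) ∨
    (a.val = 2 * t - 1 ∧ b.val = 2 * t) ∨
    (a.val = 2 * t ∧ b.val = 2 * t + 1) ∨
    (a.val = 2 * t + 1 ∧ b.val = 2 * t + 2))


theorem effRes_eq {V : Type*} [Fintype V] [DecidableEq V] (G : SimpleGraph V) [DecidableRel G.Adj]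
    (u v : V) (h : u ≠ v) : effRes G u v =
    Matrix.det ((G.lapMatrix ℝ).submatrix
        (fun w : {w : V // w ≠ u ∧ w ≠ v} => (w : V)) (fun w => (w : V)))
      / Matrix.det ((G.lapMatrix ℝ).submatrix
        (fun w : {w : V // w ≠ u} => (w : V)) (fun w => (w : V))) := by
  unfold effRes
  simp only [if_neg h]
  congr!

theorem degRes_eq {V : Type*} [Fintype V] [DecidableEq V] (G : SimpleGraph V) [DecidableRel G.Adj] :
    degRes G = (1 / 2) * ∑ u : V, ∑ v : V,
      ((G.degree u : ℝ) + (G.degree v : ℝ)) * effRes G u v := by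
  unfold degRes
  congr!

theorem det_minor {V : Type*} [Fintype V] [DecidableEq V] (L : Matrix V V ℝ) (u v : V) (h : u ≠ v) :
    Matrix.det (L.submatrix
        (fun w : {w : V // w ≠ u ∧ w ≠ v} => (w : V)) (fun w => (w : V))) =
    Matrix.cramer (L.submatrix (fun w : {w : V // w ≠ u} => (w : V)) (fun w => (w : V)))
      (Pi.single ⟨v, h.symm⟩ 1) ⟨v, h.symm⟩ := by
  rw [Matrix.cramer_apply]
  set M := L.submatrix (fun w : {w : V // w ≠ u} => (w : V)) (fun w : {w : V // w ≠ u} => (w : V)) with hM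
  rw [Matrix.twoBlockTriangular_det
    (M.updateCol ⟨v, h.symm⟩ (Pi.single ⟨v, h.symm⟩ 1)) (fun w => (w : V) = v)]
  · have e1 : (Matrix.toSquareBlockProp (M.updateCol ⟨v, h.symm⟩ (Pi.single ⟨v, h.symm⟩ 1))
      (fun w => (w : V) = v)).det = 1 := by
      have : Unique {w : {w : V // w ≠ u} // (w : V) = v} :=
        ⟨⟨⟨⟨v, h.symm⟩, rfl⟩⟩, fun a => by
          apply Subtype.ext; apply Subtype.ext; exact a.2⟩
      rw [Matrix.det_unique]
      have : ((default : {w : {w : V // w ≠ u} // (w : V) = v}) : {w : V // w ≠ u}) = ⟨v, h.symm⟩ :=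
        Subtype.ext (default : {w : {w : V // w ≠ u} // (w : V) = v}).2
      simp [Matrix.toSquareBlockProp, this]
    rw [e1, one_mul]
    let e : {w : {w : V // w ≠ u} // ¬ (w : V) = v} ≃ {w : V // w ≠ u ∧ w ≠ v} :=
      Equiv.subtypeSubtypeEquivSubtypeInter (fun w => w ≠ u) (fun w => w ≠ v)
    rw [← Matrix.det_submatrix_equiv_self e]
    congr 1
    ext i j
    have hj : (j : {w : V // w ≠ u}) ≠ ⟨v, h.symm⟩ := fun hh => j.2 (congrArg Subtype.val hh)
    simp [Matrix.toSquareBlockProp, Matrix.updateCol_ne hj, hM, e]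
  · intro i hi j hj
    have : j = ⟨v, h.symm⟩ := Subtype.ext hj
    subst this
    rw [Matrix.updateCol_self, Pi.single_eq_of_ne]
    rintro rfl
    exact hi rfl

theorem effRes_of_potential {V : Type*} [Fintype V] [DecidableEq V] (G : SimpleGraph V)
    [DecidableRel G.Adj] (hG : G.Connected) (u v : V) (h : u ≠ v) (x : V → ℝ) 
    (hx : ∀ w, w ≠ u → (G.lapMatrix ℝ).mulVec x w = if w = v then 1 else 0) :
    effRes G u v = x v - x u := by
  rw [effRes_eq G u v h, det_minor _ u v h]
  set M := (G.lapMatrix ℝ).submatrix (fun w : {w : V // w ≠ u} => (w : V))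
    (fun w : {w : V // w ≠ u} => (w : V)) with hM
  have key : ∀ y : V → ℝ, y u = 0 → ∀ w : {w : V // w ≠ u},
      M.mulVec (fun w => y w) w = (G.lapMatrix ℝ).mulVec y w := by
    intro y hy w
    simp only [Matrix.mulVec, dotProduct, hM, Matrix.submatrix_apply]
    rw [← Fintype.sum_subtype_add_sum_subtype (fun w => w ≠ u)
      (fun j => G.lapMatrix ℝ w j * y j)]
    rw [left_eq_add]
    apply Finset.sum_eq_zero
    rintro ⟨j, hj⟩ -
    have : j = u := not_not.mp hj
    simp [this, hy]
  have hdet : M.det ≠ 0 := by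
    intro h0
    obtain ⟨z, hz, hz2⟩ := Matrix.exists_mulVec_eq_zero_iff.mpr h0
    let y : V → ℝ := fun w => if hw : w ≠ u then z ⟨w, hw⟩ else 0
    have hyu : y u = 0 := by simp [y]
    have hyz : (fun w : {w : V // w ≠ u} => y w) = z := by
      ext w; simp [y, w.2]
    have h1 : ∀ w, w ≠ u → (G.lapMatrix ℝ).mulVec y w = 0 := by
      intro w hw
      rw [← key y hyu ⟨w, hw⟩, hyz, hz2]; rfl
    have h2 : Matrix.toLinearMap₂' ℝ (G.lapMatrix ℝ) y y = 0 := by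
      rw [Matrix.toLinearMap₂'_apply']
      apply Finset.sum_eq_zero
      intro w _
      by_cases hw : w = u
      · simp [hw, hyu]
      · simp [h1 w hw]
    rw [SimpleGraph.lapMatrix_toLinearMap₂'_apply'_eq_zero_iff_forall_reachable] at h2
    apply hz
    ext w
    have := h2 w u (hG.preconnected w u)
    rw [hyu] at this
    rw [← hyz]; simpa using this
  have hc : M.mulVec (fun w => x w - x u) = Pi.single ⟨v, h.symm⟩ 1 := by
    ext w
    rw [key (fun w => x w - x u) (by simp) w]
    have : (fun w => x w - x u) = x - x u • (fun _ => (1:ℝ)) := by ext; simp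
    rw [this, Matrix.mulVec_sub, Matrix.mulVec_smul]
    have hone := SimpleGraph.lapMatrix_mulVec_const_eq_zero (R := ℝ) G
    rw [hone]
    simp only [smul_zero, sub_zero]
    rw [hx w w.2, Pi.single_apply]
    simp [Subtype.ext_iff]
  have hcr := Matrix.mulVec_cramer M (Pi.single ⟨v, h.symm⟩ 1)
  have : Matrix.cramer M (Pi.single ⟨v, h.symm⟩ 1) = M.det • (fun w : {w : V // w ≠ u} => x w - x u) := by
    apply Matrix.mulVec_injective_of_isUnit (A := M)
    · rw [Matrix.isUnit_iff_isUnit_det]; exact hdet.isUnit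
    · simp only [hcr, Matrix.mulVec_smul, hc]
  rw [this]
  simp
  field_simp

theorem lap_row {V : Type*} [Fintype V] [DecidableEq V] (G : SimpleGraph V)
    [DecidableRel G.Adj] (x : V → ℝ) (w : V) :
    (G.lapMatrix ℝ).mulVec x w = ∑ b ∈ G.neighborFinset w, (x w - x b) := by
  rw [SimpleGraph.lapMatrix_mulVec_apply, Finset.sum_sub_distrib]
  simp

theorem lap_sum {V : Type*} [Fintype V] [DecidableEq V] (G : SimpleGraph V)
    [DecidableRel G.Adj] (x : V → ℝ) :
    ∑ w, (G.lapMatrix ℝ).mulVec x w = 0 := by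
  have h1 : ∑ w, (G.lapMatrix ℝ).mulVec x w = (fun _ => (1:ℝ)) ⬝ᵥ (G.lapMatrix ℝ).mulVec x := by
    simp [dotProduct]
  rw [h1, Matrix.dotProduct_mulVec, ← Matrix.mulVec_transpose, (SimpleGraph.isSymm_lapMatrix (R := ℝ) G).eq,
    SimpleGraph.lapMatrix_mulVec_const_eq_zero]
  simp

/-- The degree resistance distance from a grounded Green function `H`. -/
theorem degRes_of {V : Type*} [Fintype V] [DecidableEq V] (G : SimpleGraph V)
    [DecidableRel G.Adj] (hG : G.Connected) (o : V) (d : V → ℝ) (H : V → V → ℝ)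
    (hd : ∀ u, (G.degree u : ℝ) = d u)
    (hrow : ∀ w v, w ≠ o → ∑ b ∈ G.neighborFinset w, (H w v - H b v) = if v = w then 1 else 0) :
    degRes G = (Fintype.card V) * ∑ u, d u * H u u + (∑ u, d u) * ∑ u, H u u
      - ∑ u, ∑ v, (d u + d v) * H u v := by
  have hL : ∀ v w, (G.lapMatrix ℝ).mulVec (fun b => H b v) w =
      (if w = v then 1 else 0) - (if w = o then 1 else 0) := by
    intro v w
    have hne : ∀ w, w ≠ o → (G.lapMatrix ℝ).mulVec (fun b => H b v) w =
      (if w = v then 1 else 0) - (if w = o then 1 else 0) := by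
      intro w hw
      rw [lap_row, hrow w v hw]
      simp [hw, eq_comm]
    by_cases hw : w = o
    · subst hw
      have h1 := lap_sum G (fun b => H b v)
      have h2 : ∑ b, ((if b = v then (1:ℝ) else 0) - (if b = w then 1 else 0)) = 0 := by
        simp
      rw [← Finset.add_sum_erase _ _ (Finset.mem_univ w)] at h1 h2
      rw [Finset.sum_congr rfl (fun b hb => hne b (Finset.ne_of_mem_erase hb))] at h1
      linarith
    · exact hne w hw
  have hR : ∀ u v, effRes G u v = H v v + H u u - H u v - H v u := by
    intro u v
    by_cases h : u = v
    · subst h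
      simp [effRes]
    · rw [effRes_of_potential G hG u v h (fun b => H b v - H b u)]
      · ring
      · intro w hw
        have : (fun b => H b v - H b u) = (fun b => H b v) - (fun b => H b u) := rfl
        rw [this, Matrix.mulVec_sub, Pi.sub_apply, hL, hL]
        simp [hw]
  rw [degRes_eq]
  simp_rw [hR, hd]
  have e : ∀ u v, (d u + d v) * (H v v + H u u - H u v - H v u) =
      ((d u * H u u + d v * H u u) + (d v * H v v + d u * H v v))
        - ((d u + d v) * H u v + (d v + d u) * H v u) := by intros; ring
  simp_rw [e]
  simp only [Finset.sum_sub_distrib]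
  have hsym : ∀ F : V → V → ℝ, ∑ u, ∑ v, (F u v + F v u) = ∑ u, ∑ v, F u v + ∑ u, ∑ v, F u v := by
    intro F
    simp only [Finset.sum_add_distrib]
    congr 1
    rw [Finset.sum_comm]
  have e1 : ∑ u, ∑ v, ((d u * H u u + d v * H u u) + (d v * H v v + d u * H v v)) =
     ∑ u, ∑ v, (d u * H u u + d v * H u u) + ∑ u, ∑ v, (d u * H u u + d v * H u u) := by
    exact hsym (fun u v => d u * H u u + d v * H u u)
  have e2 : ∑ u, ∑ v, ((d u + d v) * H u v + (d v + d u) * H v u) =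
     ∑ u, ∑ v, (d u + d v) * H u v + ∑ u, ∑ v, (d u + d v) * H u v :=
    hsym (fun u v => (d u + d v) * H u v)
  have e3 : ∑ u, ∑ v, (d u * H u u + d v * H u u) =
      (Fintype.card V) * ∑ u, d u * H u u + (∑ u, d u) * ∑ u, H u u := by
    simp only [Finset.sum_add_distrib, ← Finset.sum_mul, Finset.sum_const, Finset.card_univ,
      nsmul_eq_mul, ← Finset.mul_sum, mul_assoc]
  rw [e1, e2, e3]
  ring

/-- Indicator. -/
noncomputable def dl (k v : ℕ) : ℝ := if v = k then 1 else 0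

theorem sum_dl (n k : ℕ) (hk : k < n) (f : ℕ → ℝ) :
    ∑ v ∈ Finset.range n, f v * dl k v = f k := by
  simp [dl, hk]

theorem nb_one {n : ℕ} (G : SimpleGraph (Fin n)) [DecidableRel G.Adj] (w : Fin n) (p : ℕ)
    (hp : p < n) (h : ∀ b : Fin n, G.Adj w b ↔ b.val = p) :
    (∀ f : ℕ → ℝ, ∑ b ∈ G.neighborFinset w, f b.val = f p) ∧ (G.degree w : ℝ) = 1 := by
  have : G.neighborFinset w = {⟨p, hp⟩} := by
    ext b; simp [h, Fin.ext_iff]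
  rw [← SimpleGraph.card_neighborFinset_eq_degree, this]
  simp

theorem nb_two {n : ℕ} (G : SimpleGraph (Fin n)) [DecidableRel G.Adj] (w : Fin n) (p q : ℕ)
    (hp : p < n) (hq : q < n) (hpq : p ≠ q) (h : ∀ b : Fin n, G.Adj w b ↔ b.val = p ∨ b.val = q) :
    (∀ f : ℕ → ℝ, ∑ b ∈ G.neighborFinset w, f b.val = f p + f q) ∧ (G.degree w : ℝ) = 2 := by
  have : G.neighborFinset w = {⟨p, hp⟩, ⟨q, hq⟩} := by
    ext b; simp [h, Fin.ext_iff]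
  have hne : (⟨p, hp⟩ : Fin n) ≠ ⟨q, hq⟩ := by simpa using hpq
  rw [← SimpleGraph.card_neighborFinset_eq_degree, this]
  refine ⟨fun f => ?_, ?_⟩
  · rw [Finset.sum_pair hne]
  · rw [Finset.card_pair hne]; norm_num

theorem sum_shape (s m : ℕ) (f : ℕ → ℝ) (z a c : ℝ) (h0 : f 0 = z)
    (h1 : ∀ k, 1 ≤ k → k ≤ 2 * s → f k = a) (h2 : ∀ k, 2 * s + 7 ≤ k → f k = c) :
    ∑ k ∈ Finset.range (2 * s + 7 + m), f k = z + 2 * s * a +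
      (f (2*s+1) + f (2*s+2) + f (2*s+3) + f (2*s+4) + f (2*s+5) + f (2*s+6)) + m * c := by
  have hA : ∑ k ∈ Finset.range (2 * s + 1), f k = z + 2 * s * a := by
    rw [Finset.sum_range_succ', h0,
      Finset.sum_congr rfl (fun k hk => h1 (k+1) (by omega) (by
        have := Finset.mem_range.mp hk; omega))]
    simp; ring
  rw [Finset.sum_range_add, Finset.sum_congr rfl (fun k _ => h2 (2*s+7+k) (by omega))]
  simp only [Finset.sum_range_succ] at hA ⊢
  rw [hA]
  simp; ring

theorem sum_dl_two (n k l : ℕ) (hk : k < n) (hl : l < n) (a b : ℝ) (f : ℕ → ℝ) :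
    ∑ v ∈ Finset.range n, f v * (a * dl k v + b * dl l v) = a * f k + b * f l := by
  have : ∀ v, f v * (a * dl k v + b * dl l v) = a * (f v * dl k v) + b * (f v * dl l v) := by
    intro v; ring
  simp_rw [this, Finset.sum_add_distrib, ← Finset.mul_sum, sum_dl n k hk, sum_dl n l hl]

theorem sum_dl_three (n k l p : ℕ) (hk : k < n) (hl : l < n) (hp : p < n) (a b c : ℝ)
    (f : ℕ → ℝ) :
    ∑ v ∈ Finset.range n, f v * (a * dl k v + b * dl l v + c * dl p v)
      = a * f k + b * f l + c * f p := by
  have : ∀ v, f v * (a * dl k v + b * dl l v + c * dl p v)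
      = a * (f v * dl k v) + b * (f v * dl l v) + c * (f v * dl p v) := by
    intro v; ring
  simp_rw [this, Finset.sum_add_distrib, ← Finset.mul_sum, sum_dl n k hk, sum_dl n l hl,
    sum_dl n p hp]

theorem degRes_fin (n : ℕ) (hn : 0 < n) (G : SimpleGraph (Fin n)) [DecidableRel G.Adj]
    (d : ℕ → ℝ) (H : ℕ → ℕ → ℝ)
    (hd0 : (G.degree ⟨0, hn⟩ : ℝ) = d 0)
    (hloc : ∀ w : Fin n, w.val ≠ 0 →
      (∀ v : ℕ, ∑ b ∈ G.neighborFinset w, (H w.val v - H b.val v) = dl w.val v) ∧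
      (G.degree w : ℝ) = d w.val ∧ G.Reachable ⟨0, hn⟩ w) :
    degRes G = n * ∑ u ∈ Finset.range n, d u * H u u
      + (∑ u ∈ Finset.range n, d u) * ∑ u ∈ Finset.range n, H u u
      - ∑ u ∈ Finset.range n, ∑ v ∈ Finset.range n, (d u + d v) * H u v := by
  have hne : ∀ w : Fin n, w ≠ ⟨0, hn⟩ → w.val ≠ 0 := by
    intro w hw h; exact hw (Fin.ext h)
  have hconn : G.Connected := by
    rw [SimpleGraph.connected_iff_exists_forall_reachable]
    refine ⟨⟨0, hn⟩, fun w => ?_⟩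
    by_cases hw : w = ⟨0, hn⟩
    · rw [hw]
    · exact (hloc w (hne w hw)).2.2
  rw [degRes_of G hconn ⟨0, hn⟩ (fun u => d u.val) (fun u v => H u.val v.val)]
  · rw [Fin.sum_univ_eq_sum_range (fun u => d u * H u u), Fin.sum_univ_eq_sum_range d,
      Fin.sum_univ_eq_sum_range (fun u => H u u), Fintype.card_fin]
    congr 1
    rw [← Fin.sum_univ_eq_sum_range (fun u => ∑ v ∈ Finset.range n, (d u + d v) * H u v)]
    apply Finset.sum_congr rfl
    intro u _
    rw [Fin.sum_univ_eq_sum_range (fun v => (d u.val + d v) * H u.val v)]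
  · intro u
    by_cases hw : u = ⟨0, hn⟩
    · subst hw; exact hd0
    · exact (hloc u (hne u hw)).2.1
  · intro w v hw
    rw [(hloc w (hne w hw)).1 v.val]
    simp [dl, Fin.ext_iff]

noncomputable def dg0 (s m : ℕ) (k : ℕ) : ℝ :=
  if k = 0 then 2 * s + 6 + m else if k ≤ 2 * s + 4 then 2 else 1

noncomputable def H0 (s : ℕ) (k v : ℕ) : ℝ :=
  if k = 0 then 0
  else if k ≤ 2 * s + 4 then
    (if k % 2 = 1 then 2 / 3 * dl k v + 1 / 3 * dl (k + 1) v
      else 2 / 3 * dl k v + 1 / 3 * dl (k - 1) v)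
  else dl k v

noncomputable def dg8 (s m : ℕ) (k : ℕ) : ℝ :=
  if k = 0 then 2 * s + 4 + m else if k ≤ 2 * s + 6 then 2 else 1

noncomputable def H8 (s : ℕ) (k v : ℕ) : ℝ :=
  if k = 0 then 0
  else if k ≤ 2 * s then
    (if k % 2 = 1 then 2 / 3 * dl k v + 1 / 3 * dl (k + 1) v
      else 2 / 3 * dl k v + 1 / 3 * dl (k - 1) v)
  else if k = 2 * s + 1 then
    3 / 4 * dl (2 * s + 1) v + 1 / 2 * dl (2 * s + 2) v + 1 / 4 * dl (2 * s + 3) v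
  else if k = 2 * s + 2 then
    1 / 2 * dl (2 * s + 1) v + 1 * dl (2 * s + 2) v + 1 / 2 * dl (2 * s + 3) v
  else if k = 2 * s + 3 then
    1 / 4 * dl (2 * s + 1) v + 1 / 2 * dl (2 * s + 2) v + 3 / 4 * dl (2 * s + 3) v
  else if k = 2 * s + 4 then
    3 / 4 * dl (2 * s + 4) v + 1 / 2 * dl (2 * s + 5) v + 1 / 4 * dl (2 * s + 6) v
  else if k = 2 * s + 5 then
    1 / 2 * dl (2 * s + 4) v + 1 * dl (2 * s + 5) v + 1 / 2 * dl (2 * s + 6) v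
  else if k = 2 * s + 6 then
    1 / 4 * dl (2 * s + 4) v + 1 / 2 * dl (2 * s + 5) v + 3 / 4 * dl (2 * s + 6) v
  else dl k v

theorem H0_zero (s v : ℕ) : H0 s 0 v = 0 := by simp [H0]
theorem H0_odd (s k v : ℕ) (h : k % 2 = 1) (h2 : k ≤ 2 * s + 4) :
    H0 s k v = 2 / 3 * dl k v + 1 / 3 * dl (k + 1) v := by
  unfold H0; split_ifs <;> first | rfl | omega
theorem H0_even (s k v : ℕ) (h : k % 2 = 0) (h1 : k ≠ 0) (h2 : k ≤ 2 * s + 4) :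
    H0 s k v = 2 / 3 * dl k v + 1 / 3 * dl (k - 1) v := by
  unfold H0; split_ifs <;> first | rfl | omega
theorem H0_pend (s k v : ℕ) (h : 2 * s + 5 ≤ k) : H0 s k v = dl k v := by
  unfold H0; split_ifs <;> first | rfl | omega

theorem H8_zero (s v : ℕ) : H8 s 0 v = 0 := by simp [H8]
theorem H8_odd (s k v : ℕ) (h : k % 2 = 1) (h2 : k ≤ 2 * s) :
    H8 s k v = 2 / 3 * dl k v + 1 / 3 * dl (k + 1) v := by
  unfold H8; split_ifs <;> first | rfl | omega
theorem H8_even (s k v : ℕ) (h : k % 2 = 0) (h1 : k ≠ 0) (h2 : k ≤ 2 * s) :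
    H8 s k v = 2 / 3 * dl k v + 1 / 3 * dl (k - 1) v := by
  unfold H8; split_ifs <;> first | rfl | omega
theorem H8_1 (s k v : ℕ) (h : k = 2 * s + 1) : H8 s k v =
    3 / 4 * dl (2 * s + 1) v + 1 / 2 * dl (2 * s + 2) v + 1 / 4 * dl (2 * s + 3) v := by
  unfold H8; split_ifs <;> first | rfl | omega
theorem H8_2 (s k v : ℕ) (h : k = 2 * s + 2) : H8 s k v =
    1 / 2 * dl (2 * s + 1) v + 1 * dl (2 * s + 2) v + 1 / 2 * dl (2 * s + 3) v := by
  unfold H8; split_ifs <;> first | rfl | omega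
theorem H8_3 (s k v : ℕ) (h : k = 2 * s + 3) : H8 s k v =
    1 / 4 * dl (2 * s + 1) v + 1 / 2 * dl (2 * s + 2) v + 3 / 4 * dl (2 * s + 3) v := by
  unfold H8; split_ifs <;> first | rfl | omega
theorem H8_4 (s k v : ℕ) (h : k = 2 * s + 4) : H8 s k v =
    3 / 4 * dl (2 * s + 4) v + 1 / 2 * dl (2 * s + 5) v + 1 / 4 * dl (2 * s + 6) v := by
  unfold H8; split_ifs <;> first | rfl | omega
theorem H8_5 (s k v : ℕ) (h : k = 2 * s + 5) : H8 s k v =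
    1 / 2 * dl (2 * s + 4) v + 1 * dl (2 * s + 5) v + 1 / 2 * dl (2 * s + 6) v := by
  unfold H8; split_ifs <;> first | rfl | omega
theorem H8_6 (s k v : ℕ) (h : k = 2 * s + 6) : H8 s k v =
    1 / 4 * dl (2 * s + 4) v + 1 / 2 * dl (2 * s + 5) v + 3 / 4 * dl (2 * s + 6) v := by
  unfold H8; split_ifs <;> first | rfl | omega
theorem H8_pend (s k v : ℕ) (h : 2 * s + 7 ≤ k) : H8 s k v = dl k v := by
  unfold H8; split_ifs <;> first | rfl | omega

theorem G0_adj (n t : ℕ) (a b : Fin n) : (G0 n t).Adj a b ↔ a.val ≠ b.val ∧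
    ((a.val = 0 ∨ (a.val % 2 = 1 ∧ b.val = a.val + 1 ∧ b.val ≤ 2 * t)) ∨
     (b.val = 0 ∨ (b.val % 2 = 1 ∧ a.val = b.val + 1 ∧ a.val ≤ 2 * t))) := by
  simp only [G0, SimpleGraph.fromRel_adj, Nat.odd_iff, ne_eq, Fin.ext_iff]

theorem G8_adj (n s : ℕ) (a b : Fin n) : (G8g n (s + 2)).Adj a b ↔ a.val ≠ b.val ∧
    (((a.val = 0 ∧ b.val ≠ 2 * s + 2 ∧ b.val ≠ 2 * s + 5) ∨
    (a.val % 2 = 1 ∧ b.val = a.val + 1 ∧ b.val ≤ 2 * s) ∨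
    (a.val = 2 * s + 1 ∧ b.val = 2 * s + 2) ∨
    (a.val = 2 * s + 2 ∧ b.val = 2 * s + 3) ∨
    (a.val = 2 * s + 4 ∧ b.val = 2 * s + 5) ∨
    (a.val = 2 * s + 5 ∧ b.val = 2 * s + 6)) ∨
    ((b.val = 0 ∧ a.val ≠ 2 * s + 2 ∧ a.val ≠ 2 * s + 5) ∨
    (b.val % 2 = 1 ∧ a.val = b.val + 1 ∧ a.val ≤ 2 * s) ∨
    (b.val = 2 * s + 1 ∧ a.val = 2 * s + 2) ∨
    (b.val = 2 * s + 2 ∧ a.val = 2 * s + 3) ∨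
    (b.val = 2 * s + 4 ∧ a.val = 2 * s + 5) ∨
    (b.val = 2 * s + 5 ∧ a.val = 2 * s + 6))) := by
  simp only [G8g, SimpleGraph.fromRel_adj, Nat.odd_iff, ne_eq, Fin.ext_iff]
  have e1 : 2 * (s + 2) - 2 = 2 * s + 2 := by omega
  have e2 : 2 * (s + 2) - 3 = 2 * s + 1 := by omega
  have e3 : 2 * (s + 2) - 4 = 2 * s := by omega
  have e4 : 2 * (s + 2) - 1 = 2 * s + 3 := by omega
  rw [e1, e2, e3, e4, show 2 * (s + 2) = 2 * s + 4 by ring]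

theorem G0_reach (n t : ℕ) (hn : 0 < n) (w : Fin n) (hw : w.val ≠ 0) :
    (G0 n t).Reachable ⟨0, hn⟩ w := by
  apply SimpleGraph.Adj.reachable
  rw [G0_adj]; simp; omega

theorem G8_reach (n s : ℕ) (hn : 2 * s + 7 ≤ n) (w : Fin n) (hw : w.val ≠ 0) :
    (G8g n (s + 2)).Reachable ⟨0, by omega⟩ w := by
  by_cases h : w.val = 2 * s + 2
  · have h1 : (G8g n (s + 2)).Adj ⟨0, by omega⟩ ⟨2 * s + 1, by omega⟩ := by
      rw [G8_adj]; simp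
    have h2 : (G8g n (s + 2)).Adj ⟨2 * s + 1, by omega⟩ w := by
      rw [G8_adj]; simp only; grind
    exact h1.reachable.trans h2.reachable
  by_cases h' : w.val = 2 * s + 5
  · have h1 : (G8g n (s + 2)).Adj ⟨0, by omega⟩ ⟨2 * s + 4, by omega⟩ := by
      rw [G8_adj]; simp
    have h2 : (G8g n (s + 2)).Adj ⟨2 * s + 4, by omega⟩ w := by
      rw [G8_adj]; simp only; grind
    exact h1.reachable.trans h2.reachable
  apply SimpleGraph.Adj.reachable
  rw [G8_adj]; simp only; grind

theorem G0_deg (n t : ℕ) (hn : 0 < n) [DecidableRel (G0 n t).Adj] :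
    ((G0 n t).degree ⟨0, hn⟩ : ℝ) = n - 1 := by
  have : (G0 n t).neighborFinset ⟨0, hn⟩ = Finset.univ.erase ⟨0, hn⟩ := by
    ext b; rw [SimpleGraph.mem_neighborFinset, G0_adj]; simp [Fin.ext_iff, eq_comm]
  rw [← SimpleGraph.card_neighborFinset_eq_degree, this, Finset.card_erase_of_mem (Finset.mem_univ _)]
  simp [Nat.cast_sub (show 1 ≤ n from hn)]

theorem G8_deg (n s : ℕ) (hn : 2 * s + 7 ≤ n) [DecidableRel (G8g n (s + 2)).Adj] :
    ((G8g n (s + 2)).degree ⟨0, by omega⟩ : ℝ) = n - 3 := by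
  have : (G8g n (s + 2)).neighborFinset ⟨0, by omega⟩ = ((Finset.univ.erase ⟨0, by omega⟩).erase
      ⟨2 * s + 2, by omega⟩).erase ⟨2 * s + 5, by omega⟩ := by
    ext b; rw [SimpleGraph.mem_neighborFinset, G8_adj]
    simp only [Finset.mem_erase, Finset.mem_univ, Fin.ext_iff, ne_eq]; grind
  rw [← SimpleGraph.card_neighborFinset_eq_degree, this, Finset.card_erase_of_mem (by simp),
    Finset.card_erase_of_mem (by simp), Finset.card_erase_of_mem (Finset.mem_univ _)]
  simp only [Finset.card_univ, Fintype.card_fin]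
  rw [Nat.sub_sub, Nat.sub_sub, Nat.cast_sub (by omega)]
  norm_num

theorem G0_val (s m : ℕ) : degRes (G0 (2 * s + 7 + m) (s + 2)) =
    (2 * s + 7 + m) * (8 / 3 * (s + 2) + (2 + m))
      + (6 * s + 16 + 2 * m) * (4 / 3 * (s + 2) + (2 + m))
      - 2 * (4 * (s + 2) + (2 + m)) := by
  classical
  rw [degRes_fin (2 * s + 7 + m) (by omega) _ (dg0 s m) (H0 s)]
  · have dz : dg0 s m 0 = 2 * s + 6 + m := by simp [dg0]
    have d2 : ∀ k, 1 ≤ k → k ≤ 2 * s + 4 → dg0 s m k = 2 := by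
      intro k h1 h2; unfold dg0; split_ifs <;> first | rfl | omega
    have d1 : ∀ k, 2 * s + 5 ≤ k → dg0 s m k = 1 := by
      intro k h1; unfold dg0; split_ifs <;> first | rfl | omega
    have Hz : H0 s 0 0 = 0 := H0_zero s 0
    have Ht : ∀ k, 1 ≤ k → k ≤ 2 * s + 4 → H0 s k k = 2 / 3 := by
      intro k h1 h2
      rcases Nat.mod_two_eq_zero_or_one k with h | h
      · rw [H0_even s k k h (by omega) h2, dl, dl, if_pos rfl, if_neg (by omega)]; ring
      · rw [H0_odd s k k h h2, dl, dl, if_pos rfl, if_neg (by omega)]; ring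
    have Hp : ∀ k, 2 * s + 5 ≤ k → H0 s k k = 1 := by
      intro k h; rw [H0_pend s k k h, dl, if_pos rfl]
    have ez : ∑ v ∈ Finset.range (2 * s + 7 + m), (dg0 s m 0 + dg0 s m v) * H0 s 0 v = 0 := by
      simp [H0_zero]
    have et : ∀ k, 1 ≤ k → k ≤ 2 * s + 4 →
        ∑ v ∈ Finset.range (2 * s + 7 + m), (dg0 s m k + dg0 s m v) * H0 s k v = 4 := by
      intro k h1 h2
      rcases Nat.mod_two_eq_zero_or_one k with h | h
      · simp_rw [H0_even s k _ h (by omega) h2]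
        rw [sum_dl_two _ _ _ (by omega) (by omega), d2 k h1 h2, d2 (k - 1) (by omega) (by omega)]
        norm_num
      · simp_rw [H0_odd s k _ h h2]
        rw [sum_dl_two _ _ _ (by omega) (by omega), d2 k h1 h2, d2 (k + 1) (by omega) (by omega)]
        norm_num
    have ep : ∀ k, k < 2 * s + 7 + m → 2 * s + 5 ≤ k →
        ∑ v ∈ Finset.range (2 * s + 7 + m), (dg0 s m k + dg0 s m v) * H0 s k v = 2 := by
      intro k hk h
      simp_rw [H0_pend s k _ h]
      rw [sum_dl _ _ hk, d1 k h]; norm_num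
    have ep' : ∀ k, 2 * s + 5 ≤ k → (if k < 2 * s + 7 + m then
        ∑ v ∈ Finset.range (2 * s + 7 + m), (dg0 s m k + dg0 s m v) * H0 s k v else 2) = 2 := by
      intro k h
      split_ifs with hk
      · exact ep k hk h
      · rfl
    have hS : ∑ k ∈ Finset.range (2 * s + 7 + m), ∑ v ∈ Finset.range (2 * s + 7 + m),
        (dg0 s m k + dg0 s m v) * H0 s k v = ∑ k ∈ Finset.range (2 * s + 7 + m),
        (if k < 2 * s + 7 + m then
        ∑ v ∈ Finset.range (2 * s + 7 + m), (dg0 s m k + dg0 s m v) * H0 s k v else 2) := by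
      apply Finset.sum_congr rfl
      intro k hk
      rw [if_pos (Finset.mem_range.mp hk)]
    rw [hS, sum_shape s m (dg0 s m) _ 2 1 dz (fun k h1 h2 => d2 k h1 (by omega))
        (fun k h => d1 k (by omega)),
      sum_shape s m (fun k => H0 s k k) 0 (2 / 3) 1 Hz (fun k h1 h2 => Ht k h1 (by omega))
        (fun k h => Hp k (by omega)),
      sum_shape s m (fun k => dg0 s m k * H0 s k k) 0 (4 / 3) 1 (by simp [Hz])
        (fun k h1 h2 => by rw [d2 k h1 (by omega), Ht k h1 (by omega)]; norm_num)
        (fun k h => by rw [d1 k (by omega), Hp k (by omega)]; norm_num),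
      sum_shape s m _ 0 4 2 (by rw [if_pos (by omega), ez])
        (fun k h1 h2 => by rw [if_pos (by omega), et k h1 (by omega)])
        (fun k h => ep' k (by omega)),
      ep' (2 * s + 5) (by omega), ep' (2 * s + 6) (by omega),
      if_pos (by omega), if_pos (by omega), if_pos (by omega), if_pos (by omega)]
    rw [et (2 * s + 1) (by omega) (by omega), et (2 * s + 2) (by omega) (by omega),
      et (2 * s + 3) (by omega) (by omega), et (2 * s + 4) (by omega) (by omega)]
    rw [Ht (2 * s + 1) (by omega) (by omega), Ht (2 * s + 2) (by omega) (by omega),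
      Ht (2 * s + 3) (by omega) (by omega), Ht (2 * s + 4) (by omega) (by omega),
      Hp (2 * s + 5) (by omega), Hp (2 * s + 6) (by omega),
      d2 (2 * s + 1) (by omega) (by omega), d2 (2 * s + 2) (by omega) (by omega),
      d2 (2 * s + 3) (by omega) (by omega), d2 (2 * s + 4) (by omega) (by omega),
      d1 (2 * s + 5) (by omega), d1 (2 * s + 6) (by omega)]
    push_cast
    ring
  · rw [G0_deg]; simp [dg0]; ring
  · intro w hw
    have hwn := w.isLt
    rw [← and_assoc]
    refine ⟨?_, G0_reach _ _ _ w hw⟩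
    by_cases hp : 2 * s + 5 ≤ w.val
    · obtain ⟨hs, hd⟩ := nb_one (G0 (2 * s + 7 + m) (s + 2)) w 0 (by omega) (by
        intro b; rw [G0_adj]; grind)
      refine ⟨fun v => ?_, ?_⟩
      · rw [hs (fun b => H0 s w.val v - H0 s b v), H0_zero, H0_pend s w.val v hp]; ring
      · rw [hd, dg0, if_neg hw, if_neg (by omega)]
    rcases Nat.mod_two_eq_zero_or_one w.val with h | h
    · obtain ⟨hs, hd⟩ := nb_two (G0 (2 * s + 7 + m) (s + 2)) w 0 (w.val - 1) (by omega)
        (by omega) (by omega) (by intro b; rw [G0_adj]; grind)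
      refine ⟨fun v => ?_, ?_⟩
      · rw [hs (fun b => H0 s w.val v - H0 s b v), H0_zero, H0_even s w.val v h hw (by omega),
          H0_odd s (w.val - 1) v (by omega) (by omega), Nat.sub_add_cancel (by omega)]; ring
      · rw [hd, dg0, if_neg hw, if_pos (by omega)]
    · obtain ⟨hs, hd⟩ := nb_two (G0 (2 * s + 7 + m) (s + 2)) w 0 (w.val + 1) (by omega)
        (by omega) (by omega) (by intro b; rw [G0_adj]; grind)
      refine ⟨fun v => ?_, ?_⟩
      · rw [hs (fun b => H0 s w.val v - H0 s b v), H0_zero, H0_odd s w.val v h (by omega),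
          H0_even s (w.val + 1) v (by omega) (by omega) (by omega), Nat.add_sub_cancel]; ring
      · rw [hd, dg0, if_neg hw, if_pos (by omega)]

theorem G8_val (s m : ℕ) : degRes (G8g (2 * s + 7 + m) (s + 2)) =
    (2 * s + 7 + m) * (8 / 3 * s + 10 + m)
      + (6 * s + 16 + 2 * m) * (4 / 3 * s + 5 + m)
      - 2 * (4 * s + 20 + m) := by
  classical
  rw [degRes_fin (2 * s + 7 + m) (by omega) _ (dg8 s m) (H8 s)]
  · have dz : dg8 s m 0 = 2 * s + 4 + m := by simp [dg8]
    have d2 : ∀ k, 1 ≤ k → k ≤ 2 * s + 6 → dg8 s m k = 2 := by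
      intro k h1 h2; unfold dg8; split_ifs <;> first | rfl | omega
    have d1 : ∀ k, 2 * s + 7 ≤ k → dg8 s m k = 1 := by
      intro k h1; unfold dg8; split_ifs <;> first | rfl | omega
    have Hz : H8 s 0 0 = 0 := H8_zero s 0
    have Ht : ∀ k, 1 ≤ k → k ≤ 2 * s → H8 s k k = 2 / 3 := by
      intro k h1 h2
      rcases Nat.mod_two_eq_zero_or_one k with h | h
      · rw [H8_even s k k h (by omega) h2, dl, dl, if_pos rfl, if_neg (by omega)]; ring
      · rw [H8_odd s k k h h2, dl, dl, if_pos rfl, if_neg (by omega)]; ring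
    have Hp : ∀ k, 2 * s + 7 ≤ k → H8 s k k = 1 := by
      intro k h; rw [H8_pend s k k h, dl, if_pos rfl]
    have ez : ∑ v ∈ Finset.range (2 * s + 7 + m), (dg8 s m 0 + dg8 s m v) * H8 s 0 v = 0 := by
      simp [H8_zero]
    have et : ∀ k, 1 ≤ k → k ≤ 2 * s →
        ∑ v ∈ Finset.range (2 * s + 7 + m), (dg8 s m k + dg8 s m v) * H8 s k v = 4 := by
      intro k h1 h2
      rcases Nat.mod_two_eq_zero_or_one k with h | h
      · simp_rw [H8_even s k _ h (by omega) h2]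
        rw [sum_dl_two _ _ _ (by omega) (by omega), d2 k h1 (by omega), d2 (k - 1) (by omega) (by omega)]
        norm_num
      · simp_rw [H8_odd s k _ h h2]
        rw [sum_dl_two _ _ _ (by omega) (by omega), d2 k h1 (by omega), d2 (k + 1) (by omega) (by omega)]
        norm_num
    have ep : ∀ k, k < 2 * s + 7 + m → 2 * s + 7 ≤ k →
        ∑ v ∈ Finset.range (2 * s + 7 + m), (dg8 s m k + dg8 s m v) * H8 s k v = 2 := by
      intro k hk h
      simp_rw [H8_pend s k _ h]
      rw [sum_dl _ _ hk, d1 k h]; norm_num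
    have ep' : ∀ k, 2 * s + 7 ≤ k → (if k < 2 * s + 7 + m then
        ∑ v ∈ Finset.range (2 * s + 7 + m), (dg8 s m k + dg8 s m v) * H8 s k v else 2) = 2 := by
      intro k h
      split_ifs with hk
      · exact ep k hk h
      · rfl
    have Hd1 : H8 s (2 * s + 1) (2 * s + 1) = 3 / 4 := by
      rw [H8_1 s _ _ rfl]; simp [dl]
    have e1 : (if 2 * s + 1 < 2 * s + 7 + m then ∑ v ∈ Finset.range (2 * s + 7 + m),
        (dg8 s m (2 * s + 1) + dg8 s m v) * H8 s (2 * s + 1) v else 2) = 6 := by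
      rw [if_pos (by omega)]
      simp_rw [H8_1 s (2 * s + 1) _ rfl]
      rw [sum_dl_three _ _ _ _ (by omega) (by omega) (by omega), d2 (2 * s + 1) (by omega) (by omega),
        d2 (2 * s + 2) (by omega) (by omega), d2 (2 * s + 3) (by omega) (by omega)]
      norm_num
    have Hd2 : H8 s (2 * s + 2) (2 * s + 2) = 1 := by
      rw [H8_2 s _ _ rfl]; simp [dl]
    have e2 : (if 2 * s + 2 < 2 * s + 7 + m then ∑ v ∈ Finset.range (2 * s + 7 + m),
        (dg8 s m (2 * s + 2) + dg8 s m v) * H8 s (2 * s + 2) v else 2) = 8 := by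
      rw [if_pos (by omega)]
      simp_rw [H8_2 s (2 * s + 2) _ rfl]
      rw [sum_dl_three _ _ _ _ (by omega) (by omega) (by omega), d2 (2 * s + 1) (by omega) (by omega),
        d2 (2 * s + 2) (by omega) (by omega), d2 (2 * s + 3) (by omega) (by omega)]
      norm_num
    have Hd3 : H8 s (2 * s + 3) (2 * s + 3) = 3 / 4 := by
      rw [H8_3 s _ _ rfl]; simp [dl]
    have e3 : (if 2 * s + 3 < 2 * s + 7 + m then ∑ v ∈ Finset.range (2 * s + 7 + m),
        (dg8 s m (2 * s + 3) + dg8 s m v) * H8 s (2 * s + 3) v else 2) = 6 := by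
      rw [if_pos (by omega)]
      simp_rw [H8_3 s (2 * s + 3) _ rfl]
      rw [sum_dl_three _ _ _ _ (by omega) (by omega) (by omega), d2 (2 * s + 1) (by omega) (by omega),
        d2 (2 * s + 2) (by omega) (by omega), d2 (2 * s + 3) (by omega) (by omega)]
      norm_num
    have Hd4 : H8 s (2 * s + 4) (2 * s + 4) = 3 / 4 := by
      rw [H8_4 s _ _ rfl]; simp [dl]
    have e4 : (if 2 * s + 4 < 2 * s + 7 + m then ∑ v ∈ Finset.range (2 * s + 7 + m),
        (dg8 s m (2 * s + 4) + dg8 s m v) * H8 s (2 * s + 4) v else 2) = 6 := by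
      rw [if_pos (by omega)]
      simp_rw [H8_4 s (2 * s + 4) _ rfl]
      rw [sum_dl_three _ _ _ _ (by omega) (by omega) (by omega), d2 (2 * s + 4) (by omega) (by omega),
        d2 (2 * s + 5) (by omega) (by omega), d2 (2 * s + 6) (by omega) (by omega)]
      norm_num
    have Hd5 : H8 s (2 * s + 5) (2 * s + 5) = 1 := by
      rw [H8_5 s _ _ rfl]; simp [dl]
    have e5 : (if 2 * s + 5 < 2 * s + 7 + m then ∑ v ∈ Finset.range (2 * s + 7 + m),
        (dg8 s m (2 * s + 5) + dg8 s m v) * H8 s (2 * s + 5) v else 2) = 8 := by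
      rw [if_pos (by omega)]
      simp_rw [H8_5 s (2 * s + 5) _ rfl]
      rw [sum_dl_three _ _ _ _ (by omega) (by omega) (by omega), d2 (2 * s + 4) (by omega) (by omega),
        d2 (2 * s + 5) (by omega) (by omega), d2 (2 * s + 6) (by omega) (by omega)]
      norm_num
    have Hd6 : H8 s (2 * s + 6) (2 * s + 6) = 3 / 4 := by
      rw [H8_6 s _ _ rfl]; simp [dl]
    have e6 : (if 2 * s + 6 < 2 * s + 7 + m then ∑ v ∈ Finset.range (2 * s + 7 + m),
        (dg8 s m (2 * s + 6) + dg8 s m v) * H8 s (2 * s + 6) v else 2) = 6 := by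
      rw [if_pos (by omega)]
      simp_rw [H8_6 s (2 * s + 6) _ rfl]
      rw [sum_dl_three _ _ _ _ (by omega) (by omega) (by omega), d2 (2 * s + 4) (by omega) (by omega),
        d2 (2 * s + 5) (by omega) (by omega), d2 (2 * s + 6) (by omega) (by omega)]
      norm_num
    have hS : ∑ k ∈ Finset.range (2 * s + 7 + m), ∑ v ∈ Finset.range (2 * s + 7 + m),
        (dg8 s m k + dg8 s m v) * H8 s k v = ∑ k ∈ Finset.range (2 * s + 7 + m),
        (if k < 2 * s + 7 + m then
        ∑ v ∈ Finset.range (2 * s + 7 + m), (dg8 s m k + dg8 s m v) * H8 s k v else 2) := by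
      apply Finset.sum_congr rfl
      intro k hk
      rw [if_pos (Finset.mem_range.mp hk)]
    rw [hS, sum_shape s m (dg8 s m) _ 2 1 dz (fun k h1 h2 => d2 k h1 (by omega))
        (fun k h => d1 k (by omega)),
      sum_shape s m (fun k => H8 s k k) 0 (2 / 3) 1 Hz (fun k h1 h2 => Ht k h1 (by omega))
        (fun k h => Hp k (by omega)),
      sum_shape s m (fun k => dg8 s m k * H8 s k k) 0 (4 / 3) 1 (by simp [Hz])
        (fun k h1 h2 => by rw [d2 k h1 (by omega), Ht k h1 (by omega)]; norm_num)
        (fun k h => by rw [d1 k (by omega), Hp k (by omega)]; norm_num),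
      sum_shape s m _ 0 4 2 (by rw [if_pos (by omega), ez])
        (fun k h1 h2 => by rw [if_pos (by omega), et k h1 (by omega)])
        (fun k h => ep' k (by omega)),
      e1, e2, e3, e4, e5, e6]
    rw [Hd1, Hd2, Hd3, Hd4, Hd5, Hd6,
      d2 (2 * s + 1) (by omega) (by omega), d2 (2 * s + 2) (by omega) (by omega),
      d2 (2 * s + 3) (by omega) (by omega), d2 (2 * s + 4) (by omega) (by omega),
      d2 (2 * s + 5) (by omega) (by omega), d2 (2 * s + 6) (by omega) (by omega)]
    push_cast
    ring
  · rw [G8_deg _ _ (by omega)]; simp [dg8]; ring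
  · intro w hw
    have hwn := w.isLt
    rw [← and_assoc]
    refine ⟨?_, G8_reach _ _ (by omega) w hw⟩
    by_cases hp : 2 * s + 7 ≤ w.val
    · obtain ⟨hs, hd⟩ := nb_one (G8g (2 * s + 7 + m) (s + 2)) w 0 (by omega) (by
        intro b; rw [G8_adj]; grind)
      refine ⟨fun v => ?_, ?_⟩
      · rw [hs (fun b => H8 s w.val v - H8 s b v), H8_zero, H8_pend s w.val v hp]; ring
      · rw [hd, dg8, if_neg hw, if_neg (by omega)]
    by_cases h1 : w.val = 2 * s + 1
    · obtain ⟨hs, hd⟩ := nb_two (G8g (2 * s + 7 + m) (s + 2)) w 0 (2 * s + 2) (by omega)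
        (by omega) (by omega) (by intro b; rw [G8_adj]; grind)
      refine ⟨fun v => ?_, ?_⟩
      · rw [hs (fun b => H8 s w.val v - H8 s b v), h1, H8_zero, H8_2 s (2 * s + 2) v rfl, H8_1 s (2 * s + 1) v rfl]
        ring
      · rw [hd, dg8, if_neg hw, if_pos (by omega)]
    by_cases h2 : w.val = 2 * s + 2
    · obtain ⟨hs, hd⟩ := nb_two (G8g (2 * s + 7 + m) (s + 2)) w (2 * s + 1) (2 * s + 3) (by omega)
        (by omega) (by omega) (by intro b; rw [G8_adj]; grind)
      refine ⟨fun v => ?_, ?_⟩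
      · rw [hs (fun b => H8 s w.val v - H8 s b v), h2, H8_1 s (2 * s + 1) v rfl, H8_3 s (2 * s + 3) v rfl, H8_2 s (2 * s + 2) v rfl]
        ring
      · rw [hd, dg8, if_neg hw, if_pos (by omega)]
    by_cases h3 : w.val = 2 * s + 3
    · obtain ⟨hs, hd⟩ := nb_two (G8g (2 * s + 7 + m) (s + 2)) w 0 (2 * s + 2) (by omega)
        (by omega) (by omega) (by intro b; rw [G8_adj]; grind)
      refine ⟨fun v => ?_, ?_⟩
      · rw [hs (fun b => H8 s w.val v - H8 s b v), h3, H8_zero, H8_2 s (2 * s + 2) v rfl, H8_3 s (2 * s + 3) v rfl]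
        ring
      · rw [hd, dg8, if_neg hw, if_pos (by omega)]
    by_cases h4 : w.val = 2 * s + 4
    · obtain ⟨hs, hd⟩ := nb_two (G8g (2 * s + 7 + m) (s + 2)) w 0 (2 * s + 5) (by omega)
        (by omega) (by omega) (by intro b; rw [G8_adj]; grind)
      refine ⟨fun v => ?_, ?_⟩
      · rw [hs (fun b => H8 s w.val v - H8 s b v), h4, H8_zero, H8_5 s (2 * s + 5) v rfl, H8_4 s (2 * s + 4) v rfl]
        ring
      · rw [hd, dg8, if_neg hw, if_pos (by omega)]
    by_cases h5 : w.val = 2 * s + 5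
    · obtain ⟨hs, hd⟩ := nb_two (G8g (2 * s + 7 + m) (s + 2)) w (2 * s + 4) (2 * s + 6) (by omega)
        (by omega) (by omega) (by intro b; rw [G8_adj]; grind)
      refine ⟨fun v => ?_, ?_⟩
      · rw [hs (fun b => H8 s w.val v - H8 s b v), h5, H8_4 s (2 * s + 4) v rfl, H8_6 s (2 * s + 6) v rfl, H8_5 s (2 * s + 5) v rfl]
        ring
      · rw [hd, dg8, if_neg hw, if_pos (by omega)]
    by_cases h6 : w.val = 2 * s + 6
    · obtain ⟨hs, hd⟩ := nb_two (G8g (2 * s + 7 + m) (s + 2)) w 0 (2 * s + 5) (by omega)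
        (by omega) (by omega) (by intro b; rw [G8_adj]; grind)
      refine ⟨fun v => ?_, ?_⟩
      · rw [hs (fun b => H8 s w.val v - H8 s b v), h6, H8_zero, H8_5 s (2 * s + 5) v rfl, H8_6 s (2 * s + 6) v rfl]
        ring
      · rw [hd, dg8, if_neg hw, if_pos (by omega)]
    rcases Nat.mod_two_eq_zero_or_one w.val with h | h
    · obtain ⟨hs, hd⟩ := nb_two (G8g (2 * s + 7 + m) (s + 2)) w 0 (w.val - 1) (by omega)
        (by omega) (by omega) (by intro b; rw [G8_adj]; grind)
      refine ⟨fun v => ?_, ?_⟩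
      · rw [hs (fun b => H8 s w.val v - H8 s b v), H8_zero, H8_even s w.val v h hw (by omega),
          H8_odd s (w.val - 1) v (by omega) (by omega), Nat.sub_add_cancel (by omega)]; ring
      · rw [hd, dg8, if_neg hw, if_pos (by omega)]
    · obtain ⟨hs, hd⟩ := nb_two (G8g (2 * s + 7 + m) (s + 2)) w 0 (w.val + 1) (by omega)
        (by omega) (by omega) (by intro b; rw [G8_adj]; grind)
      refine ⟨fun v => ?_, ?_⟩
      · rw [hs (fun b => H8 s w.val v - H8 s b v), H8_zero, H8_odd s w.val v h (by omega),
          H8_even s (w.val + 1) v (by omega) (by omega) (by omega), Nat.add_sub_cancel]; ring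
      · rw [hd, dg8, if_neg hw, if_pos (by omega)]

/-- `D_R(G8) - D_R(G⁰(n,t)) = (10/3)n + (2/3)t - 62/3`. -/
theorem stmt_15 (n t : ℕ) (h1 : 2 * t + 3 ≤ n) (ht : 2 ≤ t) :
    degRes (G8g n t) - degRes (G0 n t) = (10 / 3) * (n : ℝ) + (2 / 3) * t - 62 / 3 := by
  obtain ⟨s, rfl⟩ := Nat.exists_eq_add_of_le' ht
  obtain ⟨m, rfl⟩ : ∃ m, n = 2 * s + 7 + m := ⟨n - (2 * s + 7), by omega⟩
  rw [G8_val, G0_val]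
  push_cast
  ring
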